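/- Let m, m_t, m_r be positive integers with m_r ≥ m_t, m_t ≤ m, m_r ≤ m and m_t + m_r > m. Let U be Haar distributed on the unitary group U(m) and let H be the upper-left m_r×m_t block of U. Then for every s ≥ 0, E[ln det(I_{m_t} + s·HᴴH)] ≤ (m_t + m_r − m)·ln(1 + s) + (m − m_r)·ln(1 + s·(m − m_t)/m). -/

import Mathlib

open MeasureTheory Matrix

/-- Borel measurable-space structure on the unitary group `U(m)`. -/
noncomputable instance (m : ℕ) : MeasurableSpace (Matrix.unitaryGroup (Fin m) ℂ) := borel _

instance (m : ℕ) : BorelSpace (Matrix.unitaryGroup (Fin m) ℂ) := ⟨rfl⟩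

/-- The MIMO Jacobi fading channel matrix: the upper-left `mr × mt` block of a
unitary `m × m` matrix `U`. -/
noncomputable def jacobiH (m mt mr : ℕ) (hr : mr ≤ m) (ht : mt ≤ m)
    (U : Matrix.unitaryGroup (Fin m) ℂ) : Matrix (Fin mr) (Fin mt) ℂ :=
  (U : Matrix (Fin m) (Fin m) ℂ).submatrix (Fin.castLE hr) (Fin.castLE ht)

/-- The ergodic capacity `E[ln det (I + s · Hᴴ H)]` of the MIMO Jacobi fading channel,
the expectation being taken with respect to the measure `μ` on the unitary group. -/
noncomputable def ergodicCapacity (m mt mr : ℕ) (hr : mr ≤ m) (ht : mt ≤ m) (s : ℝ)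
    (μ : Measure (Matrix.unitaryGroup (Fin m) ℂ)) : ℝ :=
  ∫ U, Real.log ((Matrix.det ((1 : Matrix (Fin mt) (Fin mt) ℂ) +
      (s : ℂ) • ((jacobiH m mt mr hr ht U)ᴴ * jacobiH m mt mr hr ht U))).re) ∂μ

/-!
Write `U` in block form with upper-left block `H` and lower-right block `D`. Unitarity makes the
complementary blocks of `U` satisfy
`(1 + s) ^ (m - mr) * det (1 + s • Hᴴ * H) = (1 + s) ^ mt * det (1 + s • D * Dᴴ)`,
so `ln det (1 + s • Hᴴ * H)` splits into the deterministic term `(mt + mr - m) * ln (1 + s)` and the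
capacity of the complementary channel `D`. The latter is bounded by the arithmetic-geometric mean
inequality for eigenvalues, that is, by the tangent line of the logarithm at the mean eigenvalue:
invariance under row permutations gives every entry of `U` the second moment `1 / m`, hence the mean
eigenvalue of `1 + s • D * Dᴴ` is `1 + s * (m - mt) / m`.
-/

section BlockIdentities

variable {p p' q q' R : Type*} [Fintype q] [Fintype q'] [DecidableEq p] [DecidableEq p']
  [Semiring R] {A : Matrix (p ⊕ p') (q ⊕ q') R} {B : Matrix (q ⊕ q') (p ⊕ p') R}

theorem toBlocks₁₁_mul_add_eq_one (h : A * B = 1) :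
    A.toBlocks₁₁ * B.toBlocks₁₁ + A.toBlocks₁₂ * B.toBlocks₂₁ = 1 := by
  rw [← A.fromBlocks_toBlocks, ← B.fromBlocks_toBlocks, fromBlocks_multiply, ← fromBlocks_one,
    fromBlocks_inj] at h
  exact h.1

theorem add_toBlocks₂₂_mul_eq_one (h : A * B = 1) :
    A.toBlocks₂₁ * B.toBlocks₁₂ + A.toBlocks₂₂ * B.toBlocks₂₂ = 1 := by
  rw [← A.fromBlocks_toBlocks, ← B.fromBlocks_toBlocks, fromBlocks_multiply, ← fromBlocks_one,
    fromBlocks_inj] at h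
  exact h.2.2.2

end BlockIdentities

section Determinants

variable {p p' q q' R : Type*} [Fintype p] [Fintype p'] [Fintype q] [Fintype q']
  [DecidableEq p] [DecidableEq p'] [DecidableEq q] [DecidableEq q'] [CommRing R]

theorem pow_mul_det_smul_one_sub_mul_comm (A : Matrix p q R) (B : Matrix q p R) (x : R) :
    x ^ Fintype.card q * (x • 1 - A * B).det = x ^ Fintype.card p * (x • 1 - B * A).det := by
  simpa [Matrix.eval_charpoly, smul_one_eq_diagonal] using
    congrArg (Polynomial.eval x) (Matrix.charpoly_mul_comm' A B)

theorem pow_mul_det_one_add_smul_toBlocks {W : Matrix (p ⊕ p') (q ⊕ q') R}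
    {V : Matrix (q ⊕ q') (p ⊕ p') R} (hVW : V * W = 1) (hWV : W * V = 1) (s : R) :
    (1 + s) ^ Fintype.card p' * (1 + s • (V.toBlocks₁₁ * W.toBlocks₁₁)).det =
      (1 + s) ^ Fintype.card q * (1 + s • (W.toBlocks₂₂ * V.toBlocks₂₂)).det := by
  have h₁₁ : 1 + s • (V.toBlocks₁₁ * W.toBlocks₁₁) =
      (1 + s) • 1 - (s • V.toBlocks₁₂) * W.toBlocks₂₁ := by
    rw [eq_sub_of_add_eq (toBlocks₁₁_mul_add_eq_one hVW), smul_sub, add_smul, one_smul,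
      Matrix.smul_mul, add_sub_assoc]
  have h₂₂ : 1 + s • (W.toBlocks₂₂ * V.toBlocks₂₂) =
      (1 + s) • 1 - W.toBlocks₂₁ * (s • V.toBlocks₁₂) := by
    rw [eq_sub_of_add_eq' (add_toBlocks₂₂_mul_eq_one hWV), smul_sub, add_smul, one_smul,
      Matrix.mul_smul, add_sub_assoc]
  rw [h₁₁, h₂₂, pow_mul_det_smul_one_sub_mul_comm]

end Determinants

section PositiveDefinite

open scoped ComplexOrder

variable {𝕜 p q : Type*} [RCLike 𝕜]

theorem re_trace_mul_conjTranspose_self [Fintype p] [Fintype q] (A : Matrix p q 𝕜) :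
    RCLike.re (A * Aᴴ).trace = ∑ i, ∑ j, ‖A i j‖ ^ 2 := by
  simp only [trace, diag_apply, mul_apply, conjTranspose_apply, RCLike.star_def, RCLike.mul_conj]
  norm_cast

variable [DecidableEq p]

theorem re_trace_one_add_smul [Fintype p] (s : ℝ) (M : Matrix p p 𝕜) :
    RCLike.re (1 + (s : 𝕜) • M).trace = Fintype.card p + s * RCLike.re M.trace := by
  rw [trace_add, trace_one, trace_smul, smul_eq_mul, map_add, RCLike.natCast_re,
    RCLike.re_ofReal_mul]

theorem re_det_pos_of_posDef [Fintype p] {M : Matrix p p 𝕜} (hM : M.PosDef) :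
    0 < RCLike.re M.det :=
  (RCLike.pos_iff.mp hM.det_pos).1

theorem log_det_le_of_posDef [Fintype p] {M : Matrix p p 𝕜} (hM : M.PosDef) {c : ℝ} (hc : 0 < c) :
    Real.log (RCLike.re M.det) ≤ Fintype.card p * (Real.log c - 1) + RCLike.re M.trace / c := by
  have hpos := hM.eigenvalues_pos
  have hdet : RCLike.re M.det = ∏ i, hM.1.eigenvalues i := by
    rw [hM.1.det_eq_prod_eigenvalues, ← RCLike.ofReal_prod, RCLike.ofReal_re]
  have htrace : RCLike.re M.trace = ∑ i, hM.1.eigenvalues i := by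
    rw [hM.1.trace_eq_sum_eigenvalues, ← RCLike.ofReal_sum, RCLike.ofReal_re]
  have htangent (i : p) :
      Real.log (hM.1.eigenvalues i) ≤ (Real.log c - 1) + hM.1.eigenvalues i / c := by
    have := Real.log_le_sub_one_of_pos (div_pos (hpos i) hc)
    rw [Real.log_div (hpos i).ne' hc.ne'] at this
    linarith
  calc Real.log (RCLike.re M.det) = ∑ i, Real.log (hM.1.eigenvalues i) := by
        rw [hdet, Real.log_prod fun i _ => (hpos i).ne']
    _ ≤ ∑ i, ((Real.log c - 1) + hM.1.eigenvalues i / c) := Finset.sum_le_sum fun i _ => htangent i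
    _ = Fintype.card p * (Real.log c - 1) + RCLike.re M.trace / c := by
        rw [htrace, Finset.sum_add_distrib, Finset.sum_div, Finset.sum_const, Finset.card_univ,
          nsmul_eq_mul]

theorem posDef_one_add_smul_of_add_eq_one {P Q : Matrix p p 𝕜} (hP : P.PosSemidef)
    (hQ : Q.PosSemidef) (hPQ : P + Q = 1) {s : ℝ} (hs : -1 < s) :
    (1 + (s : 𝕜) • P).PosDef := by
  rcases le_total 0 s with hs₀ | hs₀
  · exact PosDef.one.add_posSemidef (hP.smul (by exact_mod_cast hs₀))
  · have hdecomp : 1 + (s : 𝕜) • P = ((1 + s : ℝ) : 𝕜) • 1 + ((-s : ℝ) : 𝕜) • Q := by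
      rw [eq_sub_of_add_eq hPQ]
      push_cast
      module
    rw [hdecomp]
    exact (PosDef.one.smul (by exact_mod_cast (by linarith : 0 < 1 + s))).add_posSemidef
      (hQ.smul (by exact_mod_cast neg_nonneg.mpr hs₀))

end PositiveDefinite

section UnitaryBlocks

open scoped ComplexOrder

variable {𝕜 p p' q q' : Type*} [RCLike 𝕜] {W : Matrix (p ⊕ p') (q ⊕ q') 𝕜} {s : ℝ}

theorem posDef_one_add_smul_toBlocks₁₁ [Fintype p] [Fintype p'] [Finite q] [DecidableEq q]
    [DecidableEq q'] (hW : Wᴴ * W = 1) (hs : -1 < s) :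
    (1 + (s : 𝕜) • (W.toBlocks₁₁ᴴ * W.toBlocks₁₁)).PosDef :=
  have := Fintype.ofFinite q
  posDef_one_add_smul_of_add_eq_one (posSemidef_conjTranspose_mul_self _)
    (posSemidef_conjTranspose_mul_self _) (toBlocks₁₁_mul_add_eq_one hW) hs

theorem posDef_one_add_smul_toBlocks₂₂ [Finite p'] [Fintype q] [Fintype q'] [DecidableEq p]
    [DecidableEq p'] (hW : W * Wᴴ = 1) (hs : -1 < s) :
    (1 + (s : 𝕜) • (W.toBlocks₂₂ * W.toBlocks₂₂ᴴ)).PosDef :=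
  have := Fintype.ofFinite p'
  posDef_one_add_smul_of_add_eq_one (posSemidef_self_mul_conjTranspose _)
    (posSemidef_self_mul_conjTranspose _)
    ((add_comm _ _).trans (add_toBlocks₂₂_mul_eq_one hW)) hs

theorem log_det_one_add_smul_toBlocks [Fintype p] [Fintype p'] [Fintype q] [Fintype q']
    [DecidableEq p] [DecidableEq p'] [DecidableEq q] [DecidableEq q'] (hleft : Wᴴ * W = 1)
    (hright : W * Wᴴ = 1) (hs : -1 < s) :
    Real.log (RCLike.re (1 + (s : 𝕜) • (W.toBlocks₁₁ᴴ * W.toBlocks₁₁)).det) =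
      (Fintype.card q - Fintype.card p') * Real.log (1 + s) +
        Real.log (RCLike.re (1 + (s : 𝕜) • (W.toBlocks₂₂ * W.toBlocks₂₂ᴴ)).det) := by
  have hs' : 0 < 1 + s := by linarith
  have hpos₁₁ := re_det_pos_of_posDef (posDef_one_add_smul_toBlocks₁₁ hleft hs)
  have hpos₂₂ := re_det_pos_of_posDef (posDef_one_add_smul_toBlocks₂₂ hright hs)
  have hdet : (1 + s) ^ Fintype.card p' *
        RCLike.re (1 + (s : 𝕜) • (W.toBlocks₁₁ᴴ * W.toBlocks₁₁)).det =
      (1 + s) ^ Fintype.card q *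
        RCLike.re (1 + (s : 𝕜) • (W.toBlocks₂₂ * W.toBlocks₂₂ᴴ)).det := by
    have h := congrArg RCLike.re (pow_mul_det_one_add_smul_toBlocks hleft hright (s : 𝕜))
    rwa [← RCLike.ofReal_one, ← RCLike.ofReal_add, ← RCLike.ofReal_pow, ← RCLike.ofReal_pow,
      RCLike.re_ofReal_mul, RCLike.re_ofReal_mul] at h
  have hlog := congrArg Real.log hdet
  rw [Real.log_mul (pow_pos hs' _).ne' hpos₁₁.ne', Real.log_mul (pow_pos hs' _).ne' hpos₂₂.ne',
    Real.log_pow, Real.log_pow] at hlog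
  linarith

end UnitaryBlocks

section UnitaryGroup

variable {n p q R : Type*} [Fintype n] [DecidableEq n] [CommRing R] [StarRing R]

theorem permMatrix_mem_unitaryGroup (σ : Equiv.Perm n) : σ.permMatrix R ∈ unitaryGroup n R := by
  rw [mem_unitaryGroup_iff, star_eq_conjTranspose, conjTranspose_permMatrix, ← permMatrix_mul,
    inv_mul_cancel, permMatrix_one]

theorem conjTranspose_mul_submatrix_equiv [Fintype p] [DecidableEq q] (U : unitaryGroup n R)
    (r : p ≃ n) (c : q ≃ n) :
    ((U : Matrix n n R).submatrix r c)ᴴ * (U : Matrix n n R).submatrix r c = 1 := by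
  rw [conjTranspose_submatrix, submatrix_mul_equiv, ← star_eq_conjTranspose,
    mem_unitaryGroup_iff'.mp U.2, submatrix_one_equiv]

theorem submatrix_equiv_mul_conjTranspose [DecidableEq p] [Fintype q] (U : unitaryGroup n R)
    (r : p ≃ n) (c : q ≃ n) :
    (U : Matrix n n R).submatrix r c * ((U : Matrix n n R).submatrix r c)ᴴ = 1 := by
  rw [conjTranspose_submatrix, submatrix_mul_equiv, ← star_eq_conjTranspose,
    mem_unitaryGroup_iff.mp U.2, submatrix_one_equiv]

end UnitaryGroup

theorem integrable_of_continuous_of_compactSpace {X E : Type*} [TopologicalSpace X]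
    [CompactSpace X] [MeasurableSpace X] [OpensMeasurableSpace X] [NormedAddCommGroup E]
    {μ : Measure X} [IsFiniteMeasureOnCompacts μ] {F : X → E} (hF : Continuous F) :
    Integrable F μ :=
  hF.integrable_of_hasCompactSupport (HasCompactSupport.of_compactSpace F)

section HaarUnitary

variable {𝕜 n : Type*} [RCLike 𝕜] [Fintype n] [DecidableEq n]

instance compactSpace_unitaryGroup : CompactSpace (unitaryGroup n 𝕜) := by
  refine isCompact_iff_compactSpace.mp <| IsCompact.of_isClosed_subset
    (isCompact_univ_pi fun _ => isCompact_univ_pi fun _ => isCompact_closedBall (0 : 𝕜) 1)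
    isClosed_unitary fun U hU i _ j _ => ?_
  simpa using entry_norm_bound_of_unitary hU i j

theorem sum_norm_sq_col_eq_one (U : unitaryGroup n 𝕜) (j : n) :
    ∑ i, ‖(U : Matrix n n 𝕜) i j‖ ^ 2 = 1 := by
  have h := congrFun₂ (mem_unitaryGroup_iff'.mp U.2) j j
  simp only [mul_apply, star_apply, one_apply_eq, RCLike.star_def, RCLike.conj_mul] at h
  exact_mod_cast h

variable [MeasurableSpace (unitaryGroup n 𝕜)] [BorelSpace (unitaryGroup n 𝕜)]
  (μ : Measure (unitaryGroup n 𝕜))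

theorem integrable_norm_sq_apply [IsFiniteMeasure μ] (i j : n) :
    Integrable (fun U : unitaryGroup n 𝕜 => ‖(U : Matrix n n 𝕜) i j‖ ^ 2) μ :=
  integrable_of_continuous_of_compactSpace ((continuous_subtype_val.matrix_elem i j).norm.pow 2)

theorem integrable_re_trace_submatrix_mul_conjTranspose [IsFiniteMeasure μ] {p q : Type*}
    [Fintype p] [Fintype q] (f : p → n) (g : q → n) :
    Integrable (fun U : unitaryGroup n 𝕜 => RCLike.re
      ((U : Matrix n n 𝕜).submatrix f g * ((U : Matrix n n 𝕜).submatrix f g)ᴴ).trace) μ := by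
  simp_rw [re_trace_mul_conjTranspose_self, submatrix_apply]
  exact integrable_finsetSum _ fun i _ => integrable_finsetSum _ fun j _ =>
    integrable_norm_sq_apply μ (f i) (g j)

variable [μ.IsMulLeftInvariant]

theorem integral_norm_sq_apply_eq (i k j : n) :
    ∫ U : unitaryGroup n 𝕜, ‖(U : Matrix n n 𝕜) i j‖ ^ 2 ∂μ =
      ∫ U : unitaryGroup n 𝕜, ‖(U : Matrix n n 𝕜) k j‖ ^ 2 ∂μ := by
  let P : unitaryGroup n 𝕜 := ⟨_, permMatrix_mem_unitaryGroup (Equiv.swap i k)⟩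
  rw [← integral_mul_left_eq_self (fun U : unitaryGroup n 𝕜 => ‖(U : Matrix n n 𝕜) i j‖ ^ 2) P]
  simp [P, Equiv.Perm.permMatrix, PEquiv.toMatrix_toPEquiv_mul]

variable [IsProbabilityMeasure μ]

theorem integral_norm_sq_apply (i j : n) :
    ∫ U : unitaryGroup n 𝕜, ‖(U : Matrix n n 𝕜) i j‖ ^ 2 ∂μ = 1 / Fintype.card n := by
  have hcard : (Fintype.card n : ℝ) ≠ 0 := by
    exact_mod_cast (Fintype.card_pos_iff.mpr ⟨i⟩).ne'
  rw [eq_div_iff hcard, mul_comm]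
  calc Fintype.card n * ∫ U : unitaryGroup n 𝕜, ‖(U : Matrix n n 𝕜) i j‖ ^ 2 ∂μ
      = ∑ k, ∫ U : unitaryGroup n 𝕜, ‖(U : Matrix n n 𝕜) k j‖ ^ 2 ∂μ := by
        simp_rw [integral_norm_sq_apply_eq μ _ i j, Finset.sum_const, Finset.card_univ,
          nsmul_eq_mul]
    _ = ∫ U : unitaryGroup n 𝕜, ∑ k, ‖(U : Matrix n n 𝕜) k j‖ ^ 2 ∂μ :=
        (integral_finsetSum _ fun k _ => integrable_norm_sq_apply μ k j).symm
    _ = 1 := by simp [sum_norm_sq_col_eq_one]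

theorem integral_re_trace_submatrix_mul_conjTranspose {p q : Type*} [Fintype p] [Fintype q]
    (f : p → n) (g : q → n) :
    ∫ U : unitaryGroup n 𝕜, RCLike.re
        ((U : Matrix n n 𝕜).submatrix f g * ((U : Matrix n n 𝕜).submatrix f g)ᴴ).trace ∂μ =
      Fintype.card p * (Fintype.card q / Fintype.card n) := by
  simp_rw [re_trace_mul_conjTranspose_self, submatrix_apply]
  rw [integral_finsetSum _ fun i _ => integrable_finsetSum _ fun j _ =>
    integrable_norm_sq_apply μ (f i) (g j)]
  simp_rw [integral_finsetSum _ fun j _ => integrable_norm_sq_apply μ (f _) (g j),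
    integral_norm_sq_apply, Finset.sum_const, Finset.card_univ, nsmul_eq_mul, mul_one_div]

end HaarUnitary

theorem one_add_mul_pos {s x : ℝ} (hs : -1 < s) (hx₀ : 0 ≤ x) (hx₁ : x ≤ 1) : 0 < 1 + s * x := by
  rcases le_total 0 s with hs₀ | hs₀
  · positivity
  · nlinarith

theorem exists_sum_equiv_of_injective {p n : Type*} {f : p → n} (hf : f.Injective) :
    ∃ e : p ⊕ ↥(Set.range f)ᶜ ≃ n, e ∘ Sum.inl = f := by
  classical
  exact ⟨((Equiv.ofInjective f hf).sumCongr (Equiv.refl _)).trans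
    (Equiv.Set.sumCompl (Set.range f)), rfl⟩

section ErgodicCapacity

variable {𝕜 n p p' q q' : Type*} [RCLike 𝕜] [Fintype n] [DecidableEq n]

theorem continuous_toBlocks₂₂_submatrix (r : p ⊕ p' → n) (c : q ⊕ q' → n) :
    Continuous fun U : unitaryGroup n 𝕜 => ((U : Matrix n n 𝕜).submatrix r c).toBlocks₂₂ :=
  continuous_subtype_val.matrix_submatrix (r ∘ Sum.inr) (c ∘ Sum.inr)

variable [MeasurableSpace (unitaryGroup n 𝕜)] [BorelSpace (unitaryGroup n 𝕜)]
  (μ : Measure (unitaryGroup n 𝕜))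

theorem integrable_log_det_one_add_smul_toBlocks₂₂ [Fintype p'] [Fintype q'] [DecidableEq p']
    [IsFiniteMeasure μ] (r : p ⊕ p' ≃ n) (c : q ⊕ q' ≃ n) {s : ℝ} (hs : -1 < s) :
    Integrable (fun U : unitaryGroup n 𝕜 => Real.log (RCLike.re
      (1 + (s : 𝕜) • (((U : Matrix n n 𝕜).submatrix r c).toBlocks₂₂ *
        ((U : Matrix n n 𝕜).submatrix r c).toBlocks₂₂ᴴ)).det)) μ := by
  classical
  have : Fintype q := .ofInjective (c ∘ Sum.inl) (c.injective.comp Sum.inl_injective)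
  refine integrable_of_continuous_of_compactSpace (Continuous.log ?_ fun U => ?_)
  · have hblock := continuous_toBlocks₂₂_submatrix (𝕜 := 𝕜) r c
    fun_prop
  · open scoped ComplexOrder in
    exact (re_det_pos_of_posDef (posDef_one_add_smul_toBlocks₂₂
      (submatrix_equiv_mul_conjTranspose U r c) hs)).ne'

variable [μ.IsMulLeftInvariant] [IsProbabilityMeasure μ]

theorem integral_log_det_one_add_smul_toBlocks₂₂_le [Fintype p'] [Fintype q'] [DecidableEq p']
    (r : p ⊕ p' ≃ n) (c : q ⊕ q' ≃ n) {s : ℝ} (hs : -1 < s) :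
    ∫ U : unitaryGroup n 𝕜, Real.log (RCLike.re
        (1 + (s : 𝕜) • (((U : Matrix n n 𝕜).submatrix r c).toBlocks₂₂ *
          ((U : Matrix n n 𝕜).submatrix r c).toBlocks₂₂ᴴ)).det) ∂μ ≤
      Fintype.card p' * Real.log (1 + s * (Fintype.card q' / Fintype.card n)) := by
  classical
  have : Fintype q := .ofInjective (c ∘ Sum.inl) (c.injective.comp Sum.inl_injective)
  set d : ℝ := 1 + s * (Fintype.card q' / Fintype.card n) with hd
  have hcard : Fintype.card q' ≤ Fintype.card n := by
    rw [← Fintype.card_congr c, Fintype.card_sum]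
    exact Nat.le_add_left _ _
  have hd_pos : 0 < d := one_add_mul_pos hs (by positivity)
    (div_le_one_of_le₀ (by exact_mod_cast hcard) (Nat.cast_nonneg _))
  let T : unitaryGroup n 𝕜 → ℝ := fun U =>
    RCLike.re (((U : Matrix n n 𝕜).submatrix r c).toBlocks₂₂ *
      ((U : Matrix n n 𝕜).submatrix r c).toBlocks₂₂ᴴ).trace
  have hT_integrable : Integrable T μ :=
    integrable_re_trace_submatrix_mul_conjTranspose μ (r ∘ Sum.inr) (c ∘ Sum.inr)
  have hT_mean : ∫ U, T U ∂μ = Fintype.card p' * (Fintype.card q' / Fintype.card n) :=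
    integral_re_trace_submatrix_mul_conjTranspose μ (r ∘ Sum.inr) (c ∘ Sum.inr)
  calc _ ≤ ∫ U, (Fintype.card p' * (Real.log d - 1) + (Fintype.card p' + s * T U) / d) ∂μ := by
        refine integral_mono (integrable_log_det_one_add_smul_toBlocks₂₂ μ r c hs)
          (by fun_prop) fun U => ?_
        simpa only [re_trace_one_add_smul] using log_det_le_of_posDef
          (posDef_one_add_smul_toBlocks₂₂ (submatrix_equiv_mul_conjTranspose U r c) hs) hd_pos
    _ = Fintype.card p' * (Real.log d - 1) + (Fintype.card p' + s * ∫ U, T U ∂μ) / d := by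
        rw [integral_add (by fun_prop) (by fun_prop), integral_div,
          integral_add (by fun_prop) (by fun_prop), integral_const, integral_const,
          integral_const_mul, probReal_univ, one_smul, one_smul]
    _ = Fintype.card p' * Real.log d := by
        have hmean : (Fintype.card p' : ℝ) + s * (Fintype.card p' *
            (Fintype.card q' / Fintype.card n)) = Fintype.card p' * d := by
          rw [hd]
          ring
        rw [hT_mean, hmean, mul_div_cancel_right₀ _ hd_pos.ne']
        ring

theorem integral_log_det_one_add_smul_toBlocks₁₁_le [Fintype p] [Fintype p'] [Fintype q]
    [Fintype q'] [DecidableEq q] (r : p ⊕ p' ≃ n) (c : q ⊕ q' ≃ n) {s : ℝ} (hs : -1 < s) :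
    ∫ U : unitaryGroup n 𝕜, Real.log (RCLike.re
        (1 + (s : 𝕜) • (((U : Matrix n n 𝕜).submatrix r c).toBlocks₁₁ᴴ *
          ((U : Matrix n n 𝕜).submatrix r c).toBlocks₁₁)).det) ∂μ ≤
      (Fintype.card q - Fintype.card p') * Real.log (1 + s) +
        Fintype.card p' * Real.log (1 + s * (Fintype.card q' / Fintype.card n)) := by
  classical
  simp_rw [log_det_one_add_smul_toBlocks (conjTranspose_mul_submatrix_equiv _ r c)
    (submatrix_equiv_mul_conjTranspose _ r c) hs]
  rw [integral_add (integrable_const _) (integrable_log_det_one_add_smul_toBlocks₂₂ μ r c hs),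
    integral_const, probReal_univ, one_smul]
  gcongr
  exact integral_log_det_one_add_smul_toBlocks₂₂_le μ r c hs

theorem jacobi_ergodic_capacity_upper_bound_overfull_general [Fintype p] [Fintype q]
    [DecidableEq q] {f : p → n} (hf : f.Injective) {g : q → n} (hg : g.Injective)
    {s : ℝ} (hs : -1 < s) :
    ∫ U : unitaryGroup n 𝕜, Real.log (RCLike.re
        (1 + (s : 𝕜) • (((U : Matrix n n 𝕜).submatrix f g)ᴴ *
          (U : Matrix n n 𝕜).submatrix f g)).det) ∂μ ≤
      ((Fintype.card q : ℝ) + Fintype.card p - Fintype.card n) * Real.log (1 + s) +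
        ((Fintype.card n : ℝ) - Fintype.card p) *
          Real.log (1 + s * ((Fintype.card n : ℝ) - Fintype.card q) / Fintype.card n) := by
  classical
  obtain ⟨r, hr⟩ := exists_sum_equiv_of_injective hf
  obtain ⟨c, hc⟩ := exists_sum_equiv_of_injective hg
  have hblock (U : unitaryGroup n 𝕜) :
      ((U : Matrix n n 𝕜).submatrix r c).toBlocks₁₁ = (U : Matrix n n 𝕜).submatrix f g := by
    ext i j
    exact congrArg₂ (U : Matrix n n 𝕜) (congrFun hr i) (congrFun hc j)
  have hcard_rows : (Fintype.card ↥(Set.range f)ᶜ : ℝ) = Fintype.card n - Fintype.card p := by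
    rw [← Fintype.card_congr r, Fintype.card_sum, Nat.cast_add, add_sub_cancel_left]
  have hcard_cols : (Fintype.card ↥(Set.range g)ᶜ : ℝ) = Fintype.card n - Fintype.card q := by
    rw [← Fintype.card_congr c, Fintype.card_sum, Nat.cast_add, add_sub_cancel_left]
  simpa only [hblock, hcard_rows, hcard_cols, sub_sub_eq_add_sub, mul_div_assoc] using
    integral_log_det_one_add_smul_toBlocks₁₁_le μ r c hs

end ErgodicCapacity

/-- **Upper bound on the ergodic capacity when `mt + mr > m`.**
If `mr ≥ mt`, `mt ≤ m`, `mr ≤ m` and `mt + mr > m`, then for every `s ≥ 0`,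
`E[ln det (I + s · Hᴴ H)] ≤ (mt + mr − m)·ln (1 + s) + (m − mr)·ln (1 + s·(m − mt)/m)`,
the expectation being over the Haar probability measure on the unitary group `U(m)`. -/
theorem jacobi_ergodic_capacity_upper_bound_overfull
    (m mt mr : ℕ) (hm : 0 < m) (hmt : 0 < mt) (hmr : 0 < mr)
    (h1 : mt ≤ mr) (ht : mt ≤ m) (hr : mr ≤ m) (hsum : m < mt + mr)
    (μ : Measure (Matrix.unitaryGroup (Fin m) ℂ))
    [μ.IsHaarMeasure] [IsProbabilityMeasure μ]
    (s : ℝ) (hs : 0 ≤ s) :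
    ergodicCapacity m mt mr hr ht s μ
      ≤ ((mt : ℝ) + mr - m) * Real.log (1 + s) +
        ((m : ℝ) - mr) * Real.log (1 + s * ((m : ℝ) - mt) / m) := by
  simpa [ergodicCapacity, jacobiH] using jacobi_ergodic_capacity_upper_bound_overfull_general μ
    (Fin.castLE_injective hr) (Fin.castLE_injective ht) (by linarith : -1 < s)
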